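/- Let e ∈ H_n(ℍ_ℂ) be such that ê is a unitary matrix, and let T : M_n(ℍ_ℂ) → M_n(ℍ_ℂ) be any ℂ-linear bijection satisfying T(x·e*·y) = T(x)·T(y), T(e·x*·e) = T(x)*, and T(xᵈ) = T(x)ᵈ for all x, y ∈ M_n(ℍ_ℂ). Then: (i) for every x ∈ H_n(ℍ_ℂ), the value dt_n(T(x)) does not depend on the choice of such T; and (ii) dt_n(x) = dt_n(T(x)) · dt_n(e) for every x ∈ H_n(ℍ_ℂ). -/

import Mathlib

/-!
The map `A ↦ Â` is an isomorphism `M_n(ℍ_ℂ) ≅ M_{2n}(ℂ)` of complex algebras, and on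
`H_n(ℍ_ℂ)` the determinant `dt_n` is a scalar-valued continuous square root of `A ↦ det Â`
(`D_spec`): for `x₁₁ ≠ 0` this is the Schur complement formula, and the case `x₁₁ = 0` follows
by continuity along the line `A + z E₁₁`.

Since `e* = e⁻¹`, the map `x ↦ T (x e)` is an algebra automorphism of a full complex matrix
algebra. Such an automorphism is inner, so `det (T x)^ · det ê = det x̂` (`det_T`). Thus
`dt(x)` and `dt(T x) · dt(e)` are two square roots of `det x̂`. At `x = e` they agree, because
`T e = 1`. On the complex line through `e` and `x` the determinant vanishes only at finitely
many points. The complement of a finite set in `ℂ` is connected and dense, so the two square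
roots agree on the whole line, in particular at `x` (`D_T`). Independence of `T` follows by
cancelling the nonzero scalar `dt(e)`.
-/

noncomputable section

open Matrix

/-- The biquaternions `ℍ_ℂ`: quaternions with complex coefficients. -/
abbrev HC : Type := Quaternion ℂ

/-- The embedding `ℂ ⊆ ℍ_ℂ` as scalar biquaternions. -/
def cq (z : ℂ) : HC := ⟨z, 0, 0, 0⟩

/-- The `ℂ`-linear involution `x ↦ x⋄` (quaternion conjugation). -/
def qdia (x : HC) : HC := ⟨x.re, -x.imI, -x.imJ, -x.imK⟩

/-- Coefficientwise complex conjugation `x ↦ x̄`. -/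
def qbar (x : HC) : HC :=
  ⟨starRingEnd ℂ x.re, starRingEnd ℂ x.imI, starRingEnd ℂ x.imJ, starRingEnd ℂ x.imK⟩

/-- The conjugate-linear involution `x* = (x̄)⋄`. -/
def qstar (x : HC) : HC := qdia (qbar x)

/-- The natural (Euclidean/product) topology on the biquaternions `ℍ_ℂ ≅ ℂ⁴`. -/
instance : TopologicalSpace HC :=
  TopologicalSpace.induced (fun q : HC => (q.re, q.imI, q.imJ, q.imK)) inferInstance

/-- The 2×2 complex matrix `x̂` associated to a biquaternion `x`. -/
def hat (x : HC) : Matrix (Fin 2) (Fin 2) ℂ :=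
  !![x.re + Complex.I * x.imI, x.imJ + Complex.I * x.imK;
     -x.imJ + Complex.I * x.imK, x.re - Complex.I * x.imI]

/-- The `2n × 2n` complex matrix `Â` obtained by replacing every biquaternion entry `a`
of `A` by the 2×2 block `â`. -/
def hatM {n : ℕ} (A : Matrix (Fin n) (Fin n) HC) :
    Matrix (Fin n × Fin 2) (Fin n × Fin 2) ℂ :=
  Matrix.of fun p q => hat (A p.1 q.1) p.2 q.2

/-- `A` is `⋄`-hermitian: `Aᵈ = A`, i.e. `(A j i)⋄ = A i j` for all `i j`.
`H_n(ℍ_ℂ)` is the collection of all such matrices. -/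
def IsHerm {n : ℕ} (A : Matrix (Fin n) (Fin n) HC) : Prop :=
  ∀ i j, qdia (A j i) = A i j

/-- The defining properties of the sequence of determinants `(dt_n)_{n ≥ 1}`:
`D n` plays the role of `dt_{n+1} : H_{n+1}(ℍ_ℂ) → ℍ_ℂ`.
(i) continuity on `H_{n+1}(ℍ_ℂ)`; (ii) `dt₁((x₁₁)) = x₁₁`;
(iii) the inductive formula for `dt_{n+1}` when `x₁₁ ≠ 0`. -/
def IsDtSeq (D : ∀ n : ℕ, Matrix (Fin (n + 1)) (Fin (n + 1)) HC → HC) : Prop :=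
  (∀ n : ℕ, ContinuousOn (D n) {A | IsHerm A}) ∧
  (∀ A : Matrix (Fin 1) (Fin 1) HC, IsHerm A → D 0 A = A 0 0) ∧
  (∀ (n : ℕ) (A : Matrix (Fin (n + 2)) (Fin (n + 2)) HC), IsHerm A → A 0 0 ≠ 0 →
    D (n + 1) A = A 0 0 *
      D n (Matrix.of fun i j : Fin (n + 1) =>
        A i.succ j.succ - Ring.inverse (A 0 0) * A i.succ 0 * A 0 j.succ))

/-- The conjugate transpose `A*` of a matrix of biquaternions
(transpose with `*` applied entrywise). -/
def mstarB {n : ℕ} (A : Matrix (Fin n) (Fin n) HC) : Matrix (Fin n) (Fin n) HC :=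
  Matrix.of fun i j => qstar (A j i)

/-- The transpose `Aᵈ` with `⋄` applied entrywise. -/
def mdiaB {n : ℕ} (A : Matrix (Fin n) (Fin n) HC) : Matrix (Fin n) (Fin n) HC :=
  Matrix.of fun i j => qdia (A j i)

/-! ### The isomorphisms with complex matrix algebras -/

@[simp] lemma cq_re (a : ℂ) : (cq a).re = a := rfl
@[simp] lemma cq_imI (a : ℂ) : (cq a).imI = 0 := rfl
@[simp] lemma cq_imJ (a : ℂ) : (cq a).imJ = 0 := rfl
@[simp] lemma cq_imK (a : ℂ) : (cq a).imK = 0 := rfl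
@[simp] lemma qdia_re (x : HC) : (qdia x).re = x.re := rfl
@[simp] lemma qdia_imI (x : HC) : (qdia x).imI = -x.imI := rfl
@[simp] lemma qdia_imJ (x : HC) : (qdia x).imJ = -x.imJ := rfl
@[simp] lemma qdia_imK (x : HC) : (qdia x).imK = -x.imK := rfl

lemma qdia_cq (a : ℂ) : qdia (cq a) = cq a := by
  ext <;> simp

lemma qdia_zero : qdia 0 = 0 := qdia_cq 0

lemma qdia_one : qdia 1 = 1 := qdia_cq 1


/-- The `ℂ`-algebra isomorphism `x ↦ x̂` from the biquaternions onto `M₂(ℂ)`. -/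
def hatEquiv : HC ≃ₐ[ℂ] Matrix (Fin 2) (Fin 2) ℂ where
  toFun := hat
  invFun M := ⟨(M 0 0 + M 1 1) / 2, -Complex.I * (M 0 0 - M 1 1) / 2,
    (M 0 1 - M 1 0) / 2, -Complex.I * (M 0 1 + M 1 0) / 2⟩
  left_inv x := by
    have hI := Complex.I_mul_I
    ext <;> simp [hat] <;> grind
  right_inv M := by
    have hI := Complex.I_mul_I
    ext i j
    fin_cases i <;> fin_cases j <;> simp [hat] <;> grind
  map_mul' x y := by
    have hI := Complex.I_mul_I
    ext i j
    fin_cases i <;> fin_cases j <;> simp [hat, Matrix.mul_apply, Fin.sum_univ_two] <;> grind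
  map_add' x y := by
    ext i j
    fin_cases i <;> fin_cases j <;> simp [hat] <;> ring
  commutes' z := by
    ext i j
    fin_cases i <;> fin_cases j <;>
      simp [hat, Matrix.algebraMap_matrix_apply]

lemma hatEquiv_apply (x : HC) : hatEquiv x = hat x := rfl

/-- The `ℂ`-algebra isomorphism `A ↦ Â` from `M_n(ℍ_ℂ)` onto `M_{2n}(ℂ)`. -/
def hatMEquiv (n : ℕ) :
    Matrix (Fin n) (Fin n) HC ≃ₐ[ℂ] Matrix (Fin n × Fin 2) (Fin n × Fin 2) ℂ :=
  hatEquiv.mapMatrix.trans (Matrix.compAlgEquiv (Fin n) (Fin 2) ℂ ℂ)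

lemma hatMEquiv_apply {n : ℕ} (A : Matrix (Fin n) (Fin n) HC) : hatMEquiv n A = hatM A := rfl

lemma hatM_mul {n : ℕ} (A B : Matrix (Fin n) (Fin n) HC) : hatM (A * B) = hatM A * hatM B :=
  map_mul (hatMEquiv n) A B

lemma hatM_mstarB {n : ℕ} (A : Matrix (Fin n) (Fin n) HC) : hatM (mstarB A) = (hatM A)ᴴ := by
  have hq (x : HC) : hat (qstar x) = (hat x)ᴴ := by
    have hre : (qbar x).re = starRingEnd ℂ x.re := rfl
    have hI : (qbar x).imI = starRingEnd ℂ x.imI := rfl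
    have hJ : (qbar x).imJ = starRingEnd ℂ x.imJ := rfl
    have hK : (qbar x).imK = starRingEnd ℂ x.imK := rfl
    ext k l
    fin_cases k <;> fin_cases l <;> simp [hat, qstar, hre, hI, hJ, hK]
  ext ⟨i, k⟩ ⟨j, l⟩
  exact congrFun (congrFun (hq (A j i)) k) l

lemma hat_cq (a : ℂ) : hat (cq a) = a • (1 : Matrix (Fin 2) (Fin 2) ℂ) := by
  ext i j
  fin_cases i <;> fin_cases j <;> simp [hat]

lemma cq_mul (a b : ℂ) : cq (a * b) = cq a * cq b := by
  ext <;> simp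

/-! ### The Schur complement -/

lemma inverse_cq {a : ℂ} (ha : a ≠ 0) : Ring.inverse (cq a) = cq a⁻¹ := by
  have h1 : cq a * cq a⁻¹ = 1 := by
    rw [← cq_mul, mul_inv_cancel₀ ha]; rfl
  have h2 : cq a⁻¹ * cq a = 1 := by
    rw [← cq_mul, inv_mul_cancel₀ ha]; rfl
  exact Ring.inverse_unit (⟨cq a, cq a⁻¹, h1, h2⟩ : HCˣ)

lemma IsHerm.diag {n : ℕ} {A : Matrix (Fin n) (Fin n) HC} (hA : IsHerm A) (i : Fin n) :
    A i i = cq (A i i).re := by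
  have h := hA i i
  have hI := congrArg QuaternionAlgebra.imI h
  have hJ := congrArg QuaternionAlgebra.imJ h
  have hK := congrArg QuaternionAlgebra.imK h
  simp only [qdia_imI, qdia_imJ, qdia_imK] at hI hJ hK
  ext <;> simp <;> grind

lemma qdia_mul (x y : HC) : qdia (x * y) = qdia y * qdia x := by
  ext <;> simp <;> ring

lemma qdia_sub (x y : HC) : qdia (x - y) = qdia x - qdia y := by
  ext <;> simp <;> ring

lemma cq_mul_comm (a : ℂ) (x : HC) : cq a * x = x * cq a := by
  ext <;> simp <;> ring

/-- The Schur complement of the upper left entry, as it occurs in the recursion for `dt`. -/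
def schurB {n : ℕ} (A : Matrix (Fin (n + 2)) (Fin (n + 2)) HC) :
    Matrix (Fin (n + 1)) (Fin (n + 1)) HC :=
  Matrix.of fun i j : Fin (n + 1) =>
    A i.succ j.succ - Ring.inverse (A 0 0) * A i.succ 0 * A 0 j.succ

lemma IsHerm.schurB {n : ℕ} {A : Matrix (Fin (n + 2)) (Fin (n + 2)) HC} (hA : IsHerm A)
    (h0 : A 0 0 ≠ 0) : IsHerm (schurB A) := by
  intro i j
  have ha : (A 0 0).re ≠ 0 := by
    intro h
    apply h0
    rw [hA.diag 0, h]; rfl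
  simp only [_root_.schurB, Matrix.of_apply]
  rw [hA.diag 0, inverse_cq ha, qdia_sub, qdia_mul, qdia_mul, hA, hA, hA, qdia_cq, ← cq_mul_comm,
    cq_mul_comm _ (A i.succ 0), mul_assoc, cq_mul_comm]

/-- Splitting the first `2`-element block off the index set of `Â`. -/
def splitEquiv (n : ℕ) : Fin 2 ⊕ (Fin (n + 1) × Fin 2) ≃ Fin (n + 2) × Fin 2 where
  toFun := Sum.elim (fun k => (0, k)) (fun p => (p.1.succ, p.2))
  invFun p := Fin.cases (motive := fun _ => Fin 2 ⊕ (Fin (n + 1) × Fin 2))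
    (Sum.inl p.2) (fun i => Sum.inr (i, p.2)) p.1
  left_inv := by rintro (k | ⟨i, k⟩) <;> simp
  right_inv := by
    rintro ⟨i, k⟩
    induction i using Fin.cases <;> simp

/-- The Schur complement formula: `det Â = x₁₁² · det Ŝ`, since the block of the scalar
`x₁₁` is `x₁₁` times the `2 × 2` identity. -/
lemma det_hatM_schurB {n : ℕ} {A : Matrix (Fin (n + 2)) (Fin (n + 2)) HC} (hA : IsHerm A)
    (h0 : A 0 0 ≠ 0) : (hatM A).det = (A 0 0).re ^ 2 * (hatM (schurB A)).det := by
  have ha : (A 0 0).re ≠ 0 := by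
    intro h
    apply h0
    rw [hA.diag 0, h]; rfl
  set a := (A 0 0).re with ha_def
  have hA0 : A 0 0 = cq a := hA.diag 0
  let B : Matrix (Fin 2) (Fin (n + 1) × Fin 2) ℂ :=
    Matrix.of fun k q => hat (A 0 q.1.succ) k q.2
  let C : Matrix (Fin (n + 1) × Fin 2) (Fin 2) ℂ :=
    Matrix.of fun p l => hat (A p.1.succ 0) p.2 l
  let E : Matrix (Fin (n + 1) × Fin 2) (Fin (n + 1) × Fin 2) ℂ :=
    Matrix.of fun p q => hat (A p.1.succ q.1.succ) p.2 q.2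
  have hblock : (hatM A).submatrix (splitEquiv n) (splitEquiv n) =
      Matrix.fromBlocks (a • (1 : Matrix (Fin 2) (Fin 2) ℂ)) B C E := by
    rw [← hat_cq, ← hA0]
    ext (k | p) (l | q) <;> rfl
  let _ : Invertible (a • (1 : Matrix (Fin 2) (Fin 2) ℂ)) :=
    ⟨a⁻¹ • 1, by simp [smul_smul, ha], by simp [smul_smul, ha]⟩
  have hschur : E - C * ⅟(a • (1 : Matrix (Fin 2) (Fin 2) ℂ)) * B = hatM (schurB A) := by
    have hinv : ⅟(a • (1 : Matrix (Fin 2) (Fin 2) ℂ)) = a⁻¹ • 1 := rfl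
    rw [hinv]
    ext ⟨i, k⟩ ⟨j, l⟩
    have hs : hat (schurB A i j) = hat (A i.succ j.succ) -
        a⁻¹ • (hat (A i.succ 0) * hat (A 0 j.succ)) := by
      simp only [schurB, Matrix.of_apply]
      rw [hA0, inverse_cq ha, ← hatEquiv_apply, map_sub, map_mul, map_mul]
      simp only [hatEquiv_apply, hat_cq, smul_mul_assoc, one_mul]
    simp only [hatM, Matrix.of_apply, hs]
    simp [Matrix.mul_apply, B, C, E, mul_add, mul_assoc]
  rw [← Matrix.det_submatrix_equiv_self (splitEquiv n), hblock, Matrix.det_fromBlocks₁₁, hschur]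
  simp

/-! ### Complex lines of matrices -/

lemma continuous_re : Continuous (fun q : HC => q.re) :=
  have h : Continuous (fun q : HC => (q.re, q.imI, q.imJ, q.imK)) := continuous_induced_dom
  h.fst

lemma continuous_cq : Continuous cq :=
  continuous_induced_rng.2 (by
    show Continuous fun z : ℂ => (z, (0 : ℂ), (0 : ℂ), (0 : ℂ))
    fun_prop)

instance : T2Space HC := by
  refine T2Space.of_injective_continuous (f := fun q : HC => (q.re, q.imI, q.imJ, q.imK)) ?_
    continuous_induced_dom
  intro x y h
  simp only [Prod.mk.injEq] at h
  ext <;> tauto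


lemma continuous_line {n : ℕ} (A B : Matrix (Fin n) (Fin n) HC) :
    Continuous fun z : ℂ => A + z • B := by
  refine continuous_matrix fun i j => continuous_induced_rng.2 ?_
  simp only [Function.comp_def, Matrix.add_apply, Matrix.smul_apply, Quaternion.re_add,
    Quaternion.imI_add, Quaternion.imJ_add, Quaternion.imK_add, Quaternion.re_smul,
    Quaternion.imI_smul, Quaternion.imJ_smul, Quaternion.imK_smul]
  fun_prop

lemma line_zero {n : ℕ} (A B : Matrix (Fin n) (Fin n) HC) : A + (0 : ℂ) • B = A := by
  ext i j <;> simp [Matrix.add_apply]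

lemma line_one {n : ℕ} (A B : Matrix (Fin n) (Fin n) HC) : A + (1 : ℂ) • (B - A) = B := by
  ext i j <;> simp [Matrix.add_apply]

lemma hatM_line {n : ℕ} (A B : Matrix (Fin n) (Fin n) HC) (z : ℂ) :
    hatM (A + z • B) = hatM A + z • hatM B := by
  simp only [← hatMEquiv_apply, map_add, map_smul]

lemma continuous_det_line {n : ℕ} (A B : Matrix (Fin n) (Fin n) HC) :
    Continuous fun z : ℂ => (hatM (A + z • B)).det := by
  simp only [hatM_line]
  exact Continuous.matrix_det (by fun_prop)

lemma IsHerm.line {n : ℕ} {A B : Matrix (Fin n) (Fin n) HC} (hA : IsHerm A) (hB : IsHerm B)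
    (z : ℂ) : IsHerm (A + z • B) := by
  intro i j
  rw [Matrix.add_apply, Matrix.add_apply, Matrix.smul_apply, Matrix.smul_apply, ← hA i j,
    ← hB i j]
  ext <;> simp <;> ring

lemma continuous_D_line {D : ∀ m : ℕ, Matrix (Fin (m + 1)) (Fin (m + 1)) HC → HC}
    (hD : IsDtSeq D) {n : ℕ} {A B : Matrix (Fin (n + 1)) (Fin (n + 1)) HC} (hA : IsHerm A)
    (hB : IsHerm B) : Continuous fun z : ℂ => D n (A + z • B) :=
  (hD.1 n).comp_continuous (continuous_line A B) fun z => hA.line hB z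

/-! ### The determinant as a square root -/

/-- The determinant `dt` takes scalar values and is a square root of `det Â`. -/
lemma D_spec {D : ∀ m : ℕ, Matrix (Fin (m + 1)) (Fin (m + 1)) HC → HC} (hD : IsDtSeq D) :
    ∀ (n : ℕ) (A : Matrix (Fin (n + 1)) (Fin (n + 1)) HC), IsHerm A →
      D n A = cq (D n A).re ∧ (D n A).re ^ 2 = (hatM A).det := by
  intro n
  induction n with
  | zero =>
    intro A hA
    rw [hD.2.1 A hA]
    refine ⟨hA.diag 0, ?_⟩
    rw [← Matrix.det_submatrix_equiv_self (Equiv.uniqueProd (Fin 2) (Fin 1)).symm]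
    change _ = (hat (A 0 0)).det
    rw [hA.diag 0, hat_cq]
    simp
  | succ n ih =>
    have key : ∀ A : Matrix (Fin (n + 2)) (Fin (n + 2)) HC, IsHerm A → A 0 0 ≠ 0 →
        D (n + 1) A = cq (D (n + 1) A).re ∧ (D (n + 1) A).re ^ 2 = (hatM A).det := by
      intro A hA h0
      have hrec : D (n + 1) A = A 0 0 * D n (schurB A) := hD.2.2 n A hA h0
      obtain ⟨h1, h2⟩ := ih _ (hA.schurB h0)
      have h3 : D (n + 1) A = cq ((A 0 0).re * (D n (schurB A)).re) := by
        rw [cq_mul, ← h1, ← hA.diag 0, hrec]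
      rw [h3, det_hatM_schurB hA h0, ← h2, cq_re]
      exact ⟨rfl, mul_pow _ _ _⟩
    intro A hA
    by_cases h0 : A 0 0 = 0
    · -- The line `z ↦ A + z E₁₁` meets `{x₁₁ = 0}` only at `z = 0`.
      let B : Matrix (Fin (n + 2)) (Fin (n + 2)) HC := Matrix.single 0 0 1
      have hB : IsHerm B := by
        intro i j
        by_cases hi : i = 0 <;> by_cases hj : j = 0 <;>
          simp [B, hi, hj, Ne.symm, qdia_zero, qdia_one]
      have hkey (z : ℂ) (hz : z ∈ ({0}ᶜ : Set ℂ)) :=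
        key (A + z • B) (hA.line hB z) (by
          have : (A + z • B) 0 0 = z • (1 : HC) := by simp [h0, B]
          rw [this]
          intro h
          have hre : z * 1 = 0 := congrArg QuaternionAlgebra.re h
          exact hz (by simpa using hre))
      have hc := continuous_D_line hD hA hB
      have hr : Continuous fun z : ℂ => (D (n + 1) (A + z • B)).re := continuous_re.comp hc
      have e1 := hc.ext_on (dense_compl_singleton (0 : ℂ)) (continuous_cq.comp hr)
        fun z hz => (hkey z hz).1
      have e2 := (hr.pow 2).ext_on (dense_compl_singleton (0 : ℂ)) (continuous_det_line A B)
        fun z hz => (hkey z hz).2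
      have e1' := congrFun e1 0
      have e2' := congrFun e2 0
      simp only [line_zero, Function.comp_apply, Pi.pow_apply] at e1' e2'
      exact ⟨e1', e2'⟩
    · exact key A hA h0

lemma isHerm_one {n : ℕ} : IsHerm (1 : Matrix (Fin n) (Fin n) HC) := by
  intro i j
  by_cases h : i = j
  · subst h
    rw [Matrix.one_apply_eq, qdia_one]
  · rw [Matrix.one_apply_ne h, Matrix.one_apply_ne (Ne.symm h), qdia_zero]

lemma D_one {D : ∀ m : ℕ, Matrix (Fin (m + 1)) (Fin (m + 1)) HC → HC} (hD : IsDtSeq D) (n : ℕ) :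
    D n 1 = 1 := by
  induction n with
  | zero => rw [hD.2.1 1 isHerm_one]; rfl
  | succ n ih =>
    have hs : schurB (1 : Matrix (Fin (n + 2)) (Fin (n + 2)) HC) = 1 := by
      ext1 i j
      simp [schurB, Matrix.one_apply, Fin.succ_ne_zero]
    have hrec := hD.2.2 n 1 isHerm_one (by simp)
    change _ = _ * D n (schurB 1) at hrec
    rw [hrec, hs, ih]
    simp

/-! ### Comparison of the two square roots -/

lemma isHerm_iff {n : ℕ} {A : Matrix (Fin n) (Fin n) HC} : IsHerm A ↔ mdiaB A = A :=
  ⟨fun h => Matrix.ext h, fun h i j => congrFun (congrFun h i) j⟩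

/-- The zeros of `det` on a complex line through an invertible matrix form a finite set. -/
lemma finite_zeros {ι : Type*} [Fintype ι] [DecidableEq ι] (A B : Matrix ι ι ℂ)
    (hA : A.det ≠ 0) : {z : ℂ | (A + z • B).det = 0}.Finite := by
  let P : Polynomial ℂ := (A.map Polynomial.C + (Polynomial.X : Polynomial ℂ) • B.map Polynomial.C).det
  have hP (z : ℂ) : P.eval z = (A + z • B).det := by
    rw [← Polynomial.coe_evalRingHom, RingHom.map_det]
    congr 1
    ext i j
    simp
    ring
  have hP0 : P ≠ 0 := by
    intro h
    have := hP 0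
    simp [h] at this
    exact hA this.symm
  refine (P.finite_setOfPred_isRoot hP0).subset fun z hz => ?_
  simpa [Polynomial.IsRoot, hP] using hz

/-- As `e* = e⁻¹`, the map `S x = T (x e)` is an automorphism of the matrix algebra, so it
preserves `det x̂`; apply this to `T x = S (x e*)`. -/
lemma det_T {n : ℕ} {e : Matrix (Fin n) (Fin n) HC} (h1 : mstarB e * e = 1)
    (h2 : e * mstarB e = 1) (T : Matrix (Fin n) (Fin n) HC ≃ₗ[ℂ] Matrix (Fin n) (Fin n) HC)
    (hTmul : ∀ x y, T (x * mstarB e * y) = T x * T y) (x : Matrix (Fin n) (Fin n) HC) :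
    T e = 1 ∧ (hatM (T x)).det * (hatM e).det = (hatM x).det := by
  have hTe : T e = 1 := by
    have h := hTmul e (T.symm 1)
    rw [h2, one_mul, T.apply_symm_apply, mul_one] at h
    exact h.symm
  refine ⟨hTe, ?_⟩
  let S : Matrix (Fin n) (Fin n) HC →ₐ[ℂ] Matrix (Fin n) (Fin n) HC :=
    AlgHom.ofLinearMap (T.toLinearMap ∘ₗ LinearMap.mulRight ℂ e)
      (by simpa using hTe)
      (by
        intro a b
        change T (a * b * e) = T (a * e) * T (b * e)
        rw [← hTmul, mul_assoc a e, h2, mul_one, mul_assoc])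
  have hS : S (x * mstarB e) = T x := by
    change T (x * mstarB e * e) = T x
    rw [mul_assoc, h1, mul_one]
  let F := ((hatMEquiv n).toAlgHom.comp S).comp (hatMEquiv n).symm.toAlgHom
  have hF := Matrix.det_map' F (hatM (x * mstarB e))
  have hF' : F (hatM (x * mstarB e)) = hatM (T x) := by
    rw [← hS, ← hatMEquiv_apply, ← hatMEquiv_apply]
    simp [F]
  rw [hF'] at hF
  rw [hF, ← Matrix.det_mul, ← hatM_mul, mul_assoc, h1, mul_one]

/-- Both sides of `dt(x) = dt(T x) dt(e)` are square roots of `det x̂`. They agree at `x = e`,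
hence along the complex line from `e` to `x` away from the finitely many zeros of the
determinant, and then everywhere by continuity. -/
lemma D_T {D : ∀ m : ℕ, Matrix (Fin (m + 1)) (Fin (m + 1)) HC → HC} (hD : IsDtSeq D) {n : ℕ}
    {e : Matrix (Fin (n + 1)) (Fin (n + 1)) HC} (he : IsHerm e) (h1 : mstarB e * e = 1)
    (h2 : e * mstarB e = 1)
    (T : Matrix (Fin (n + 1)) (Fin (n + 1)) HC ≃ₗ[ℂ] Matrix (Fin (n + 1)) (Fin (n + 1)) HC)
    (hTmul : ∀ x y, T (x * mstarB e * y) = T x * T y)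
    (hTdia : ∀ x, T (mdiaB x) = mdiaB (T x))
    {x : Matrix (Fin (n + 1)) (Fin (n + 1)) HC} (hx : IsHerm x) (hdet : (hatM e).det ≠ 0) :
    D n x = D n (T x) * D n e := by
  have hTH {y : Matrix (Fin (n + 1)) (Fin (n + 1)) HC} (hy : IsHerm y) : IsHerm (T y) := by
    rw [isHerm_iff] at hy ⊢
    rw [← hTdia, hy]
  have hd : IsHerm (x - e) := by
    have := hx.line he (-1)
    convert this using 1
    ext i j <;> simp [Matrix.add_apply, Matrix.smul_apply, sub_eq_add_neg]
  have hTline (z : ℂ) : T (e + z • (x - e)) = T e + z • T (x - e) := by simp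
  let f : ℂ → ℂ := fun z => (D n (e + z • (x - e))).re
  let g : ℂ → ℂ := fun z => (D n (T (e + z • (x - e)))).re * (D n e).re
  have hf : Continuous f := continuous_re.comp (continuous_D_line hD he hd)
  have hg : Continuous g := by
    simp only [g, hTline]
    exact (continuous_re.comp (continuous_D_line hD (hTH he) (hTH hd))).mul continuous_const
  have hf2 (z : ℂ) : f z ^ 2 = (hatM (e + z • (x - e))).det := (D_spec hD n _ (he.line hd z)).2
  have hg2 (z : ℂ) : g z ^ 2 = (hatM (e + z • (x - e))).det := by
    rw [mul_pow, (D_spec hD n _ (hTH (he.line hd z))).2, (D_spec hD n e he).2,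
      (det_T h1 h2 T hTmul _).2]
  let Z : Set ℂ := {z | (hatM (e + z • (x - e))).det = 0}
  have hZ : Z.Finite := by
    simp only [Z, hatM_line]
    exact finite_zeros _ _ hdet
  have hconn : IsConnected Zᶜ := hZ.countable.isConnected_compl_of_one_lt_rank (by simp)
  have h1re : (1 : HC).re = 1 := rfl
  have heq : Set.EqOn f g Zᶜ := by
    refine hconn.isPreconnected.eq_of_sq_eq hf.continuousOn hg.continuousOn (y := 0) ?_ ?_ ?_ ?_
    · intro z _
      simp only [Pi.pow_apply, hf2, hg2]
    · intro z hz h0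
      apply hz
      change _ = _
      rw [← hg2, h0, zero_pow two_ne_zero]
    · simpa [Z, line_zero] using hdet
    · simp [f, g, line_zero, (det_T h1 h2 T hTmul e).1, D_one hD, h1re]
  have hfg := hf.ext_on (hZ.countable.dense_compl ℂ) hg heq
  have h := congrFun hfg 1
  simp only [f, g, line_one] at h
  rw [(D_spec hD n x hx).1, (D_spec hD n _ (hTH hx)).1, (D_spec hD n e he).1, h, cq_mul]

/-- Let `e ∈ H_n(ℍ_ℂ)` with `ê` unitary, and let `T` be any `ℂ`-linear
bijection of `M_n(ℍ_ℂ)` satisfying `T(x e* y) = T(x)T(y)`, `T(e x* e) = T(x)*` and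
`T(xᵈ) = T(x)ᵈ`. Then (i) `dt_n(T(x))` does not depend on the choice of such `T`, and
(ii) `dt_n(x) = dt_n(T(x)) · dt_n(e)` for every `x ∈ H_n(ℍ_ℂ)` (here `D n = dt_{n+1}`). -/
theorem statement6 (D : ∀ m : ℕ, Matrix (Fin (m + 1)) (Fin (m + 1)) HC → HC)
    (hD : IsDtSeq D) (n : ℕ) (e : Matrix (Fin (n + 1)) (Fin (n + 1)) HC)
    (he : IsHerm e)
    (heu₁ : (hatM e)ᴴ * hatM e = 1) (heu₂ : hatM e * (hatM e)ᴴ = 1)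
    (T T' : Matrix (Fin (n + 1)) (Fin (n + 1)) HC ≃ₗ[ℂ]
      Matrix (Fin (n + 1)) (Fin (n + 1)) HC)
    (hTmul : ∀ x y, T (x * mstarB e * y) = T x * T y)
    (hTstar : ∀ x, T (e * mstarB x * e) = mstarB (T x))
    (hTdia : ∀ x, T (mdiaB x) = mdiaB (T x))
    (hT'mul : ∀ x y, T' (x * mstarB e * y) = T' x * T' y)
    (hT'star : ∀ x, T' (e * mstarB x * e) = mstarB (T' x))
    (hT'dia : ∀ x, T' (mdiaB x) = mdiaB (T' x)) :
    ∀ x : Matrix (Fin (n + 1)) (Fin (n + 1)) HC, IsHerm x →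
      D n (T x) = D n (T' x) ∧ D n x = D n (T x) * D n e := by
  intro x hx
  have h1 : mstarB e * e = 1 := by
    apply (hatMEquiv (n + 1)).injective
    rw [map_mul, map_one, hatMEquiv_apply, hatMEquiv_apply, hatM_mstarB, heu₁]
  have h2 : e * mstarB e = 1 := by
    apply (hatMEquiv (n + 1)).injective
    rw [map_mul, map_one, hatMEquiv_apply, hatMEquiv_apply, hatM_mstarB, heu₂]
  have hdet : (hatM e).det ≠ 0 := by
    intro h
    have := congrArg Matrix.det heu₁
    rw [Matrix.det_mul, h, mul_zero, Matrix.det_one] at this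
    exact zero_ne_one this
  have hT := D_T hD he h1 h2 T hTmul hTdia hx hdet
  have hT' := D_T hD he h1 h2 T' hT'mul hT'dia hx hdet
  refine ⟨?_, hT⟩
  -- `dt(e)` is a nonzero scalar, so it can be cancelled.
  have hne : (D n e).re ≠ 0 := by
    intro h
    apply hdet
    rw [← (D_spec hD n e he).2, h, zero_pow two_ne_zero]
  have hinv : D n e * cq (D n e).re⁻¹ = 1 := by
    rw [(D_spec hD n e he).1, cq_re, ← cq_mul, mul_inv_cancel₀ hne]
    rfl
  have h := congrArg (· * cq (D n e).re⁻¹) (hT.symm.trans hT')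
  simpa only [mul_assoc, hinv, mul_one] using h
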